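/- arXiv:1812.07633 — 3 statements merged into one kernel-verified Lean document; each statement's English description precedes it below -/
import Mathlib

section
/- For all natural numbers m ≥ 1 and n ≥ 0, the following identity of rational numbers holds: 2^(m−1) · (n(n+1)/2)^m = ∑_{j=0}^{m−1, m−j odd} C(m, j) · ∑_{k=1}^{n} k^(m+j), where the outer sum ranges over those indices j with 0 ≤ j ≤ m−1 such that m − j is odd, and C(·,·) denotes the binomial coefficient. -/
open Finset

/-!
The sequence `k ↦ (k(k+1))^m` telescopes: its increment `(k(k+1))^m - (k(k-1))^m` equals
`k^m ((k+1)^m - (k-1)^m)`, and in the binomial expansion of the second factor only the powers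
`k^j` with `m - j` odd survive, each with coefficient `2 C(m, j)`. Summing over `k ≤ n` expresses
`(n(n+1))^m` through power sums.
-/

section CommRing

variable {R : Type*} [CommRing R]

lemma add_pow_sub_sub_pow_eq_two_mul_sum_odd (x y : R) (m : ℕ) :
    (x + y) ^ m - (x - y) ^ m =
      2 * ∑ j ∈ range m with Odd (m - j), (m.choose j : R) * x ^ j * y ^ (m - j) := by
  have term_sub (j : ℕ) :
      x ^ j * y ^ (m - j) * (m.choose j : R) - x ^ j * (-y) ^ (m - j) * (m.choose j : R) =
        if Odd (m - j) then 2 * ((m.choose j : R) * x ^ j * y ^ (m - j)) else 0 := by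
    split_ifs with hodd
    · rw [hodd.neg_pow]
      ring
    · rw [(Nat.not_odd_iff_even.mp hodd).neg_pow, sub_self]
  rw [sub_eq_add_neg x y, add_pow, add_pow, ← sum_sub_distrib, mul_sum, sum_filter]
  simp only [term_sub]
  simp [sum_range_succ]

lemma sum_Icc_mul_succ_pow_sub_mul_pred_pow {m : ℕ} (hm : m ≠ 0) (n : ℕ) :
    ∑ k ∈ Icc 1 n, (((k : R) * (k + 1)) ^ m - ((k : R) * (k - 1)) ^ m) =
      ((n : R) * (n + 1)) ^ m := by
  induction n with
  | zero => simp [hm]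
  | succ n ih =>
    rw [sum_Icc_succ_top (Nat.le_add_left 1 n), ih]
    push_cast
    ring

lemma mul_succ_pow_eq_two_mul_sum_odd_choose_mul_sum_pow {m : ℕ} (hm : m ≠ 0) (n : ℕ) :
    ((n : R) * (n + 1)) ^ m =
      2 * ∑ j ∈ range m with Odd (m - j),
        (m.choose j : R) * ∑ k ∈ Icc 1 n, (k : R) ^ (m + j) := by
  have increment (k : ℕ) :
      ((k : R) * (k + 1)) ^ m - ((k : R) * (k - 1)) ^ m =
        2 * ∑ j ∈ range m with Odd (m - j), (m.choose j : R) * (k : R) ^ (m + j) := by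
    rw [mul_pow, mul_pow, ← mul_sub, add_pow_sub_sub_pow_eq_two_mul_sum_odd, mul_left_comm, mul_sum]
    simp only [one_pow, mul_one, pow_add, mul_left_comm]
  calc ((n : R) * (n + 1)) ^ m
      = ∑ k ∈ Icc 1 n, (((k : R) * (k + 1)) ^ m - ((k : R) * (k - 1)) ^ m) :=
        (sum_Icc_mul_succ_pow_sub_mul_pred_pow hm n).symm
    _ = 2 * ∑ k ∈ Icc 1 n, ∑ j ∈ range m with Odd (m - j),
          (m.choose j : R) * (k : R) ^ (m + j) := by
        simp only [increment, mul_sum]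
    _ = 2 * ∑ j ∈ range m with Odd (m - j),
          (m.choose j : R) * ∑ k ∈ Icc 1 n, (k : R) ^ (m + j) := by
        rw [sum_comm]
        simp only [mul_sum]

end CommRing

theorem pow_triangular_eq_sum_odd_binom_general {K : Type*} [Field K] [NeZero (2 : K)]
    {m : ℕ} (hm : m ≠ 0) (n : ℕ) :
    (2 : K) ^ (m - 1) * ((n : K) * (n + 1) / 2) ^ m =
      ∑ j ∈ range m with Odd (m - j),
        (m.choose j : K) * ∑ k ∈ Icc 1 n, (k : K) ^ (m + j) := by
  refine mul_left_cancel₀ (two_ne_zero (α := K)) ?_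
  rw [← mul_succ_pow_eq_two_mul_sum_odd_choose_mul_sum_pow hm, ← mul_assoc, mul_pow_sub_one hm,
    ← mul_pow, mul_div_cancel₀ _ two_ne_zero]

/-- For `m ≥ 1` and any `n`,
`2^(m-1) * (n(n+1)/2)^m = ∑_{0 ≤ j ≤ m-1, m - j odd} C(m, j) * ∑_{k=1}^n k^(m+j)`. -/
theorem pow_triangular_eq_sum_odd_binom (m n : ℕ) (hm : 1 ≤ m) :
    (2 : ℚ) ^ (m - 1) * ((n * (n + 1) / 2 : ℚ)) ^ m =
      ∑ j ∈ (Finset.range m).filter (fun j => Odd (m - j)),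
        (m.choose j : ℚ) * ∑ k ∈ Finset.Icc 1 n, (k : ℚ) ^ (m + j) :=
  pow_triangular_eq_sum_odd_binom_general (Nat.one_le_iff_ne_zero.mp hm) n
end

section
/- (Faulhaber's Formula.) For every natural number m ≥ 3 there exists a polynomial P with rational coefficients, of degree m − 1 and with leading coefficient 2^m/(m+1), such that for every natural number n, ∑_{k=1}^{n} k^(2m+1) = P(n(n+1)/2) · (∑_{k=1}^{n} k)^2, where all arithmetic is in the rational numbers. -/
open Finset Polynomial

/-!
Write `T n = n (n + 1) / 2` and `S p n = ∑_{k=1}^n k^p`. The binomial theorem shows that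
`(k (k + 1)) ^ (m + 1) - ((k - 1) k) ^ (m + 1)` involves only odd powers of `k`, so telescoping
gives `2 ^ m * T n ^ (m + 1) = ∑_{j ≤ m} (m + 1).choose (2 (m - j) + 1) * S (2 j + 1) n`.
This triangular system has diagonal entries `m + 1`, and solving it expresses `S (2 m + 1)` as a
polynomial in `T` with leading term `2 ^ m / (m + 1) * T ^ (m + 1)`. For `m ≥ 1` the coefficient
at `j = 0` vanishes, so `S 1 = T` never enters and the solution is divisible by `T ^ 2`.
-/

theorem sum_range_two_mul {M : Type*} [AddCommMonoid M] (f : ℕ → M) (n : ℕ) :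
    ∑ i ∈ range (2 * n), f i = ∑ i ∈ range n, (f (2 * i) + f (2 * i + 1)) := by
  induction n with
  | zero => simp
  | succ n ih => rw [mul_add_one, sum_range_succ, sum_range_succ, sum_range_succ, ih, add_assoc]

section CommRing

variable {R : Type*} [CommRing R]

-- The exponent `n - 2 * i` is truncated only where the binomial coefficient vanishes.
theorem add_pow_sub_sub_pow (x y : R) (n : ℕ) :
    (x + y) ^ (n + 1) - (y - x) ^ (n + 1) =
      2 * ∑ i ∈ range (n + 1),
        ((n + 1).choose (2 * i + 1) : R) * (x ^ (2 * i + 1) * y ^ (n - 2 * i)) := by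
  let term (j : ℕ) : R := (1 - (-1) ^ j) * (x ^ j * y ^ (n + 1 - j) * (n + 1).choose j)
  have term_eq_zero (j : ℕ) (hj : n + 2 ≤ j) : term j = 0 := by
    simp [term, Nat.choose_eq_zero_of_lt hj]
  calc (x + y) ^ (n + 1) - (y - x) ^ (n + 1)
      = ∑ j ∈ range (n + 2), term j := by
        rw [sub_eq_neg_add y x, add_pow, add_pow, ← sum_sub_distrib]
        refine sum_congr rfl fun j _ => ?_
        rw [neg_pow x]
        ring
    _ = ∑ j ∈ range (2 * (n + 1)), term j :=
        (eventually_constant_sum term_eq_zero (by omega)).symm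
    _ = _ := by
        rw [sum_range_two_mul, mul_sum]
        refine sum_congr rfl fun i _ => ?_
        simp only [term, pow_succ (-1 : R), (even_two_mul i).neg_one_pow, Nat.add_sub_add_right]
        ring

theorem mul_add_one_pow_sub_mul_sub_one_pow (x : R) (m : ℕ) :
    (x * (x + 1)) ^ (m + 1) - (x * (x - 1)) ^ (m + 1) =
      2 * ∑ j ∈ range (m + 1), ((m + 1).choose (2 * (m - j) + 1) : R) * x ^ (2 * j + 1) := by
  rw [show x * (x + 1) = x + x ^ 2 by ring, show x * (x - 1) = x ^ 2 - x by ring,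
    add_pow_sub_sub_pow, ← sum_range_reflect]
  congr 1
  refine sum_congr rfl fun j hj => ?_
  have hjm : j ≤ m := mem_range_succ_iff.mp hj
  rw [show m + 1 - 1 - j = m - j by omega]
  obtain hlt | hle := lt_or_ge m (2 * (m - j))
  · simp [Nat.choose_eq_zero_of_lt (Nat.succ_lt_succ hlt)]
  · rw [← pow_mul, ← pow_add]
    congr 2
    omega

theorem natCast_mul_add_one_pow (m n : ℕ) :
    ((n : R) * (n + 1)) ^ (m + 1) =
      2 * ∑ j ∈ range (m + 1), ((m + 1).choose (2 * (m - j) + 1) : R) *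
        ∑ k ∈ Icc 1 n, (k : R) ^ (2 * j + 1) := by
  induction n with
  | zero => simp
  | succ n ih =>
    have step := mul_add_one_pow_sub_mul_sub_one_pow ((n + 1 : ℕ) : R) m
    have previous : ((n + 1 : ℕ) : R) * ((n + 1 : ℕ) - 1) = n * (n + 1) := by
      push_cast
      ring
    rw [previous, ih, sub_eq_iff_eq_add', ← mul_add, ← sum_add_distrib] at step
    simpa only [sum_Icc_succ_top (Nat.le_add_left 1 n), mul_add] using step

end CommRing

/-- The polynomial `F` with `∑_{k=1}^n k ^ (2 m + 1) = F (n (n + 1) / 2)`, obtained by solving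
the triangular system `∑_{j ≤ m} (m + 1).choose (2 (m - j) + 1) * F_j = 2 ^ m * X ^ (m + 1)`
for its last unknown. -/
noncomputable def faulhaberPoly (K : Type*) [Field K] (m : ℕ) : K[X] :=
  C ((m + 1 : K)⁻¹) * (C (2 ^ m) * X ^ (m + 1) -
    ∑ j : Fin m, C ((m + 1).choose (2 * (m - j) + 1) : K) * faulhaberPoly K j)

section Field

variable {K : Type*} [Field K]

theorem faulhaberPoly_eq_sum_range (m : ℕ) :
    faulhaberPoly K m = C ((m + 1 : K)⁻¹) * (C (2 ^ m) * X ^ (m + 1) -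
      ∑ j ∈ range m, C ((m + 1).choose (2 * (m - j) + 1) : K) * faulhaberPoly K j) := by
  rw [faulhaberPoly, Fin.sum_univ_eq_sum_range
    (fun j => C ((m + 1).choose (2 * (m - j) + 1) : K) * faulhaberPoly K j)]

theorem natDegree_faulhaberPoly_le (m : ℕ) : (faulhaberPoly K m).natDegree ≤ m + 1 := by
  induction m using Nat.strong_induction_on with
  | _ m ih =>
  rw [faulhaberPoly_eq_sum_range]
  refine (natDegree_C_mul_le _ _).trans <|
    (natDegree_sub_le_iff_left ?_).mpr (natDegree_C_mul_X_pow_le _ _)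
  refine natDegree_sum_le_of_forall_le _ _ fun j hj => ?_
  have hjm : j < m := mem_range.mp hj
  exact (natDegree_C_mul_le _ _).trans <| (ih j hjm).trans (by omega)

theorem coeff_faulhaberPoly_add_one (m : ℕ) :
    (faulhaberPoly K m).coeff (m + 1) = 2 ^ m / (m + 1) := by
  have lower_terms (j : ℕ) (hj : j ∈ range m) :
      (C ((m + 1).choose (2 * (m - j) + 1) : K) * faulhaberPoly K j).coeff (m + 1) = 0 := by
    have hjm : j < m := mem_range.mp hj
    rw [coeff_C_mul, coeff_eq_zero_of_natDegree_lt
      ((natDegree_faulhaberPoly_le j).trans_lt (by omega)), mul_zero]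
  rw [faulhaberPoly_eq_sum_range, coeff_C_mul, coeff_sub, finsetSum_coeff,
    sum_eq_zero lower_terms, coeff_C_mul, coeff_X_pow_self, mul_one, sub_zero, div_eq_inv_mul]

theorem X_sq_dvd_faulhaberPoly {m : ℕ} (hm : m ≠ 0) : X ^ 2 ∣ faulhaberPoly K m := by
  induction m using Nat.strong_induction_on with
  | _ m ih =>
  rw [faulhaberPoly_eq_sum_range]
  refine dvd_mul_of_dvd_right (dvd_sub ?_ (dvd_sum fun j hj => ?_)) _
  · exact dvd_mul_of_dvd_right (pow_dvd_pow X (by omega)) _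
  · obtain rfl | hj0 := eq_or_ne j 0
    · simp [Nat.choose_eq_zero_of_lt (show m + 1 < 2 * m + 1 by omega)]
    · exact dvd_mul_of_dvd_right (ih j (mem_range.mp hj) hj0) _

variable [CharZero K]

theorem natDegree_faulhaberPoly (m : ℕ) : (faulhaberPoly K m).natDegree = m + 1 := by
  refine (natDegree_faulhaberPoly_le m).antisymm (le_natDegree_of_ne_zero ?_)
  rw [coeff_faulhaberPoly_add_one]
  exact div_ne_zero (pow_ne_zero m two_ne_zero) (Nat.cast_add_one_ne_zero m)

theorem leadingCoeff_faulhaberPoly (m : ℕ) :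
    (faulhaberPoly K m).leadingCoeff = 2 ^ m / (m + 1) := by
  rw [leadingCoeff, natDegree_faulhaberPoly, coeff_faulhaberPoly_add_one]

theorem two_pow_mul_triangular_pow (m n : ℕ) :
    2 ^ m * ((n : K) * (n + 1) / 2) ^ (m + 1) =
      ∑ j ∈ range (m + 1), ((m + 1).choose (2 * (m - j) + 1) : K) *
        ∑ k ∈ Icc 1 n, (k : K) ^ (2 * j + 1) := by
  rw [div_pow, natCast_mul_add_one_pow, pow_succ]
  field_simp

theorem sum_Icc_pow_odd_eq_eval_faulhaberPoly (m n : ℕ) :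
    ∑ k ∈ Icc 1 n, (k : K) ^ (2 * m + 1) =
      (faulhaberPoly K m).eval ((n : K) * (n + 1) / 2) := by
  induction m using Nat.strong_induction_on with
  | _ m ih =>
  have lower_terms : ∑ j ∈ range m, ((m + 1).choose (2 * (m - j) + 1) : K) *
        (faulhaberPoly K j).eval ((n : K) * (n + 1) / 2) =
      ∑ j ∈ range m, ((m + 1).choose (2 * (m - j) + 1) : K) *
        ∑ k ∈ Icc 1 n, (k : K) ^ (2 * j + 1) :=
    sum_congr rfl fun j hj => by rw [ih j (mem_range.mp hj)]
  have diagonal : ((m + 1).choose (2 * (m - m) + 1) : K) = m + 1 := by simp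
  have hm : (m + 1 : K) ≠ 0 := Nat.cast_add_one_ne_zero m
  simp only [faulhaberPoly_eq_sum_range m, eval_mul, eval_sub, eval_C, eval_pow, eval_X,
    eval_finsetSum]
  rw [lower_terms, two_pow_mul_triangular_pow, sum_range_succ, add_sub_cancel_left, diagonal,
    inv_mul_cancel_left₀ hm]

theorem sum_Icc_natCast (n : ℕ) : ∑ k ∈ Icc 1 n, (k : K) = n * (n + 1) / 2 := by
  simpa using (two_pow_mul_triangular_pow (K := K) 0 n).symm

theorem faulhaber_formula_general (m : ℕ) (hm : m ≠ 0) :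
    ∃ P : K[X], P.natDegree = m - 1 ∧ P.leadingCoeff = 2 ^ m / (m + 1) ∧
      ∀ n : ℕ,
        ∑ k ∈ Icc 1 n, (k : K) ^ (2 * m + 1) =
          P.eval ((n : K) * (n + 1) / 2) * (∑ k ∈ Icc 1 n, (k : K)) ^ 2 := by
  obtain ⟨P, hP⟩ := X_sq_dvd_faulhaberPoly (K := K) hm
  have hdeg := natDegree_faulhaberPoly (K := K) m
  have hlead := leadingCoeff_faulhaberPoly (K := K) m
  have hP0 : P ≠ 0 := by
    rintro rfl
    simp [hP] at hdeg
  rw [hP, natDegree_X_pow_mul _ hP0] at hdeg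
  rw [hP, leadingCoeff_mul, leadingCoeff_X_pow, one_mul] at hlead
  refine ⟨P, by omega, hlead, fun n => ?_⟩
  rw [sum_Icc_pow_odd_eq_eval_faulhaberPoly, sum_Icc_natCast, hP, eval_mul, eval_pow, eval_X,
    mul_comm]

end Field

/-- Faulhaber's Formula: for `m ≥ 3` there is a polynomial `P` over `ℚ` of degree `m − 1`
with leading coefficient `2^m/(m+1)` such that for all `n`,
`∑_{k=1}^n k^(2m+1) = P(n(n+1)/2) * (∑_{k=1}^n k)^2`. -/
theorem faulhaber_formula (m : ℕ) (hm : 3 ≤ m) :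
    ∃ P : Polynomial ℚ, P.natDegree = m - 1 ∧ P.leadingCoeff = 2 ^ m / (m + 1) ∧
      ∀ n : ℕ,
        ∑ k ∈ Finset.Icc 1 n, (k : ℚ) ^ (2 * m + 1) =
          P.eval ((n : ℚ) * (n + 1) / 2) * (∑ k ∈ Finset.Icc 1 n, (k : ℚ)) ^ 2 :=
  faulhaber_formula_general m (by omega)
end

section
/- For every natural number m ≥ 3 there exists a polynomial Q with rational coefficients such that for every natural number n, ∑_{k=1}^{n} k^(2m+1) = (n(n+1)/2)^2 · Q(n); in particular, the polynomial in n expressing ∑_{k=1}^{n} k^(2m+1) has no linear term in n. -/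
open Finset Polynomial

/-!
Let `B_n` be the Bernoulli polynomials and `b_n` the Bernoulli numbers. Then
`∑_{k=1}^n k^p = (B_{p+1}(n+1) - B_{p+1}(1)) / (p+1)`. For odd `p ≠ 1` the number `b_p` vanishes, so
`B_{p+1} - b_{p+1}` has no linear term and hence a double zero at `0`; the symmetry
`B_{p+1}(1 - X) = B_{p+1}(X)` gives a second double zero at `1`. Shifting by one, the power sum
polynomial has double zeros at `-1` and `0`.
-/

theorem eq_of_forall_eval_natCast_eq {R : Type*} [CommRing R] [IsDomain R] [CharZero R]
    {p q : R[X]} (h : ∀ n : ℕ, p.eval (n : R) = q.eval (n : R)) : p = q := by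
  refine eq_of_infinite_eval_eq p q ((Set.infinite_range_of_injective Nat.cast_injective).mono ?_)
  rintro _ ⟨n, rfl⟩
  exact h n

theorem X_mul_one_sub_X_pow_dvd_of_comp_one_sub_X_eq {R : Type*} [CommRing R] {p : R[X]} {k : ℕ}
    (hp : p.comp (1 - X) = p) (hX : X ^ k ∣ p) : (X * (1 - X)) ^ k ∣ p := by
  have h_reflect : (1 - X) ^ k ∣ p := by
    have h_comp := map_dvd (compRingHom (1 - X)) hX
    rwa [coe_compRingHom_apply, coe_compRingHom_apply, hp, X_pow_comp] at h_comp
  have h_coprime : IsCoprime (X : R[X]) (1 - X) := ⟨1, 1, by ring⟩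
  rw [mul_pow]
  exact h_coprime.pow.mul_dvd hX h_reflect

theorem X_sq_dvd_bernoulli_sub_C {n : ℕ} (hn : Even n) (hn2 : n ≠ 2) :
    X ^ 2 ∣ Polynomial.bernoulli n - C (_root_.bernoulli n) := by
  have h_linear : (Polynomial.bernoulli n).coeff 1 = 0 := by
    rw [coeff_bernoulli]
    split_ifs with h
    · rw [bernoulli_eq_zero_of_odd (Nat.Even.sub_odd h hn odd_one) (by grind), zero_mul]
    · rfl
  rw [X_pow_dvd_iff]
  intro d hd
  interval_cases d
  · simp [coeff_bernoulli]
  · simp [h_linear]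

theorem X_mul_one_sub_X_sq_dvd_bernoulli_sub_C {n : ℕ} (hn : Even n) (hn2 : n ≠ 2) :
    (X * (1 - X)) ^ 2 ∣ Polynomial.bernoulli n - C (_root_.bernoulli n) := by
  refine X_mul_one_sub_X_pow_dvd_of_comp_one_sub_X_eq ?_ (X_sq_dvd_bernoulli_sub_C hn hn2)
  rw [sub_comp, bernoulli_comp_one_sub_X, hn.neg_one_pow, one_mul, C_comp]

/-- The Faulhaber polynomial, whose value at `n : ℕ` is `∑_{k=1}^n k^p`. The constant subtracted is
`B_{p+1}(1)`, which is `bernoulli' (p + 1)`; it differs from `bernoulli (p + 1)` for `p = 0`, where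
the latter would count the term `0 ^ 0 = 1`. -/
noncomputable def faulhaberPolynomial (p : ℕ) : ℚ[X] :=
  C (p + 1 : ℚ)⁻¹ * ((Polynomial.bernoulli (p + 1)).comp (X + 1) - C (bernoulli' (p + 1)))

theorem eval_natCast_faulhaberPolynomial (p n : ℕ) :
    (faulhaberPolynomial p).eval (n : ℚ) = ∑ k ∈ Icc 1 n, (k : ℚ) ^ p := by
  induction n with
  | zero => simp [faulhaberPolynomial]
  | succ n ih =>
    have h_step := bernoulli_eval_one_add (p + 1) (n + 1)
    rw [sum_Icc_succ_top (Nat.le_add_left 1 n), ← ih]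
    simp only [faulhaberPolynomial, eval_mul, eval_C, eval_sub, eval_comp, eval_add, eval_X,
      eval_one]
    push_cast at h_step ⊢
    rw [add_comm (n + 1 : ℚ) 1, h_step]
    field_simp
    ring

theorem X_mul_X_add_one_sq_dvd_faulhaberPolynomial {p : ℕ} (hp : Odd p) (hp1 : p ≠ 1) :
    (X * (X + 1)) ^ 2 ∣ faulhaberPolynomial p := by
  have h_shift := map_dvd (compRingHom (X + 1))
    (X_mul_one_sub_X_sq_dvd_bernoulli_sub_C hp.add_one (by lia))
  have h_factor : ((X * (1 - X) : ℚ[X]) ^ 2).comp (X + 1) = (X * (X + 1) : ℚ[X]) ^ 2 := by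
    simp only [pow_comp, mul_comp, sub_comp, X_comp, one_comp]
    ring
  rw [coe_compRingHom_apply, coe_compRingHom_apply, h_factor, sub_comp, C_comp,
    bernoulli_eq_bernoulli'_of_ne_one (by grind)] at h_shift
  exact h_shift.mul_left _

theorem sum_odd_pow_square_factor_general (m : ℕ) (hm : m ≠ 0) :
    (∃ Q : Polynomial ℚ, ∀ n : ℕ,
        ∑ k ∈ Finset.Icc 1 n, (k : ℚ) ^ (2 * m + 1) =
          ((n : ℚ) * (n + 1) / 2) ^ 2 * Q.eval (n : ℚ)) ∧
      ∀ R : Polynomial ℚ,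
        (∀ n : ℕ, ∑ k ∈ Finset.Icc 1 n, (k : ℚ) ^ (2 * m + 1) = R.eval (n : ℚ)) →
          R.coeff 1 = 0 := by
  have h_dvd := X_mul_X_add_one_sq_dvd_faulhaberPolynomial (odd_two_mul_add_one m) (by lia)
  constructor
  · obtain ⟨A, hA⟩ := h_dvd
    refine ⟨C 4 * A, fun n => ?_⟩
    rw [← eval_natCast_faulhaberPolynomial, hA]
    simp only [eval_mul, eval_pow, eval_add, eval_X, eval_one, eval_C]
    ring
  · intro R hR
    have hR_eq : R = faulhaberPolynomial (2 * m + 1) :=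
      eq_of_forall_eval_natCast_eq fun n => by rw [← hR, eval_natCast_faulhaberPolynomial]
    have hX : X ^ 2 ∣ R := hR_eq ▸ (pow_dvd_pow_of_dvd (dvd_mul_right X (X + 1)) 2).trans h_dvd
    exact X_pow_dvd_iff.mp hX 1 one_lt_two

/-- For `m ≥ 3` there is a polynomial `Q` over `ℚ` such that for all `n`,
`∑_{k=1}^n k^(2m+1) = (n(n+1)/2)^2 * Q(n)`; in particular, any polynomial in `n`
expressing `∑_{k=1}^n k^(2m+1)` has no linear term. -/
theorem sum_odd_pow_square_factor (m : ℕ) (hm : 3 ≤ m) :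
    (∃ Q : Polynomial ℚ, ∀ n : ℕ,
        ∑ k ∈ Finset.Icc 1 n, (k : ℚ) ^ (2 * m + 1) =
          ((n : ℚ) * (n + 1) / 2) ^ 2 * Q.eval (n : ℚ)) ∧
      ∀ R : Polynomial ℚ,
        (∀ n : ℕ, ∑ k ∈ Finset.Icc 1 n, (k : ℚ) ^ (2 * m + 1) = R.eval (n : ℚ)) →
          R.coeff 1 = 0 :=
  sum_odd_pow_square_factor_general m (by lia)
end
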